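/- Fix t ≥ 1, and for k ≥ 1 let δ_k(t) = lim_{N→∞} δ_k^(N)(t) (these limits exist). Then for all k ≥ 1, |δ_k(t) − δ_{k+1}(t)| ≤ 2t / h (k+1); consequently the sequence k ↦ δ_k(t) converges, so δ(t) = lim_{k→∞} δ_k(t) exists. -/

import Mathlib

/-!
Reading each word cyclically turns `δ_k(t)` into the exact value of a finite average: the
proportion of mismatches between the cyclic word `B k` and its rotation by `t`, since cutting the
cyclic word `(B k)^N` open affects only the last `t` positions. The cyclic average does not see
rotations or powers. Now `B (k+1)` is `(B k)^(b^(k+1))` with a single letter inserted, and after a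
rotation that letter stands at the very end, so that only the last `t` comparisons and the new
one can change.
-/

open MeasureTheory Filter Topology
open scoped ENNReal

/-- `m`-fold concatenation of a word. -/
def wordPow (w : List ℕ) (m : ℕ) : List ℕ := (List.replicate m w).flatten

/-- The words of the generalized del Junco–Rudolph construction:
`B 0 = [0]`, `B (k+1) = (B k)^(a·b^k) ++ [1] ++ (B k)^((b-a)·b^k)`. -/
def Bword (b a : ℕ) : ℕ → List ℕ
  | 0 => [0]
  | k + 1 => wordPow (Bword b a k) (a * b ^ k) ++ [1] ++ wordPow (Bword b a k) ((b - a) * b ^ k)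

/-- The height sequence: `h 0 = 1`, `h (k+1) = b^(k+1) * h k + 1`. -/
def hseq (b : ℕ) : ℕ → ℕ
  | 0 => 1
  | k + 1 => b ^ (k + 1) * hseq b k + 1

/-- The coding distance `δ_k^(N)(t)` computed from the word `ξ^{N,k} = (B k)^N`. -/
noncomputable def deltaN (b a k t N : ℕ) : ℝ :=
  (1 / ((N * hseq b k : ℕ) : ℝ)) *
    ∑ i ∈ Finset.range (N * hseq b k),
      if i + t < N * hseq b k then
        |(((wordPow (Bword b a k) N).getD (i + t) 0 : ℕ) : ℝ) -
          (((wordPow (Bword b a k) N).getD i 0 : ℕ) : ℝ)|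
      else 1

section PeriodicSums

variable {M : Type*} [AddCommMonoid M] {f : ℕ → M} {p : ℕ}

lemma sum_range_add_of_periodic (hf : Function.Periodic f p) (s : ℕ) :
    ∑ i ∈ Finset.range p, f (i + s) = ∑ i ∈ Finset.range p, f i := by
  induction s with
  | zero => rfl
  | succ s ih =>
    rcases p with _ | p
    · simp
    rw [← ih, Finset.sum_range_succ, Finset.sum_range_succ' (fun i => f (i + s))]
    congr 1
    · exact Finset.sum_congr rfl fun i _ => by rw [add_right_comm, add_assoc]
    · rw [← hf (0 + s)]
      congr 1
      ring

lemma sum_range_mul_of_periodic (hf : Function.Periodic f p) (n : ℕ) :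
    ∑ i ∈ Finset.range (n * p), f i = n • ∑ i ∈ Finset.range p, f i := by
  induction n with
  | zero => simp
  | succ n ih =>
    rw [Nat.succ_mul, Finset.sum_range_add, ih, succ_nsmul]
    congr 1
    refine Finset.sum_congr rfl fun i _ => ?_
    rw [add_comm]
    exact hf.nat_mul n i

end PeriodicSums

lemma abs_sum_range_sub_sum_range_le {f g : ℕ → ℝ} {n t : ℕ} (hfg : ∀ i < n, |f i - g i| ≤ 1)
    (heq : ∀ i, i + t < n → f i = g i) :
    |∑ i ∈ Finset.range n, f i - ∑ i ∈ Finset.range n, g i| ≤ t := by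
  have htail : ∑ i ∈ Finset.Ico (n - t) n, (f i - g i) = ∑ i ∈ Finset.range n, (f i - g i) := by
    refine Finset.sum_subset (fun i hi => ?_) fun i hi hi' => ?_
    · exact Finset.mem_range.2 (Finset.mem_Ico.1 hi).2
    · rw [Finset.mem_range] at hi
      rw [Finset.mem_Ico] at hi'
      rw [heq i (by omega), sub_self]
  calc |∑ i ∈ Finset.range n, f i - ∑ i ∈ Finset.range n, g i|
      = |∑ i ∈ Finset.Ico (n - t) n, (f i - g i)| := by rw [htail, Finset.sum_sub_distrib]
    _ ≤ ∑ i ∈ Finset.Ico (n - t) n, |f i - g i| := Finset.abs_sum_le_sum_abs _ _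
    _ ≤ (Finset.Ico (n - t) n).card • (1 : ℝ) :=
        Finset.sum_le_card_nsmul _ _ _ fun i hi => hfg i (Finset.mem_Ico.1 hi).2
    _ ≤ t := by
        rw [Nat.card_Ico, nsmul_one]
        exact_mod_cast (by omega : n - (n - t) ≤ t)

/-- The periodic extension of the word `w` to a sequence indexed by `ℕ`, that is, `w` read
cyclically. It is constantly `0` when `w` is empty. -/
def periodicExt (w : List ℕ) (i : ℕ) : ℕ := w.getD (i % w.length) 0

lemma periodicExt_periodic (w : List ℕ) : Function.Periodic (periodicExt w) w.length := by
  intro i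
  simp [periodicExt]

lemma periodicExt_of_lt {w : List ℕ} {i : ℕ} (hi : i < w.length) :
    periodicExt w i = w.getD i 0 := by
  rw [periodicExt, Nat.mod_eq_of_lt hi]

lemma periodicExt_append_of_lt {u : List ℕ} (v : List ℕ) {i : ℕ} (hi : i < u.length) :
    periodicExt (u ++ v) i = periodicExt u i := by
  have hi' : i < (u ++ v).length := hi.trans_le (by simp)
  rw [periodicExt_of_lt hi, periodicExt_of_lt hi', List.getD_append _ _ _ _ hi]

lemma periodicExt_rotate (w : List ℕ) (s i : ℕ) :
    periodicExt (w.rotate s) i = periodicExt w (i + s) := by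
  rcases w.length.eq_zero_or_pos with hw | hw
  · simp [List.length_eq_zero_iff.1 hw, periodicExt]
  · simp only [periodicExt, List.length_rotate, List.getD_eq_getElem?_getD,
      List.getElem?_rotate (Nat.mod_lt i hw), Nat.mod_add_mod]

lemma periodicExt_le_one {w : List ℕ} (hw : ∀ x ∈ w, x ≤ 1) (i : ℕ) : periodicExt w i ≤ 1 := by
  rw [periodicExt]
  rcases lt_or_ge (i % w.length) w.length with hi | hi
  · rw [List.getD_eq_getElem _ _ hi]
    exact hw _ (List.getElem_mem hi)
  · rw [List.getD_eq_default _ _ hi]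
    exact zero_le_one

/-- The mismatch `|x (i + t) - x i|` at position `i` between the cyclic word `x` given by `w` and
its shift by `t`. -/
def mismatch (w : List ℕ) (t i : ℕ) : ℝ := |(periodicExt w (i + t) : ℝ) - periodicExt w i|

lemma mismatch_nonneg (w : List ℕ) (t i : ℕ) : 0 ≤ mismatch w t i := abs_nonneg _

lemma mismatch_le_one {w : List ℕ} (hw : ∀ x ∈ w, x ≤ 1) (t i : ℕ) : mismatch w t i ≤ 1 :=
  abs_sub_le_of_nonneg_of_le (Nat.cast_nonneg _) (mod_cast periodicExt_le_one hw _)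
    (Nat.cast_nonneg _) (mod_cast periodicExt_le_one hw _)

lemma mismatch_zero (w : List ℕ) (i : ℕ) : mismatch w 0 i = 0 := by simp [mismatch]

lemma mismatch_periodic (w : List ℕ) (t : ℕ) : Function.Periodic (mismatch w t) w.length := by
  intro i
  simp only [mismatch, add_right_comm i w.length t, periodicExt_periodic w _]

lemma mismatch_append_of_lt {u : List ℕ} (v : List ℕ) {t i : ℕ} (hi : i + t < u.length) :
    mismatch (u ++ v) t i = mismatch u t i := by
  have hi' : i < u.length := by omega
  simp only [mismatch, periodicExt_append_of_lt v hi, periodicExt_append_of_lt v hi']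

lemma mismatch_rotate (w : List ℕ) (s t i : ℕ) :
    mismatch (w.rotate s) t i = mismatch w t (i + s) := by
  simp only [mismatch, periodicExt_rotate, add_right_comm i t s]

/-- The coding distance of a single word, of which `deltaN` is the case `w = (B k)^N`: positions
whose shift by `t` leaves the word count as mismatches. -/
noncomputable def wordDelta (w : List ℕ) (t : ℕ) : ℝ :=
  (∑ i ∈ Finset.range w.length,
    if i + t < w.length then |(w.getD (i + t) 0 : ℝ) - w.getD i 0| else 1) / w.length

/-- The coding distance of the word `w` read cyclically: the average of its mismatches under the
shift by `t` over one period. It is `0` when `w` is empty. -/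
noncomputable def cyclicDelta (w : List ℕ) (t : ℕ) : ℝ :=
  (∑ i ∈ Finset.range w.length, mismatch w t i) / w.length

lemma length_mul_cyclicDelta (w : List ℕ) (t : ℕ) :
    w.length * cyclicDelta w t = ∑ i ∈ Finset.range w.length, mismatch w t i := by
  rcases eq_or_ne w.length 0 with hw | hw
  · simp [hw]
  · exact mul_div_cancel₀ _ (Nat.cast_ne_zero.2 hw)

lemma cyclicDelta_zero (w : List ℕ) : cyclicDelta w 0 = 0 := by simp [cyclicDelta, mismatch_zero]

lemma cyclicDelta_nonneg (w : List ℕ) (t : ℕ) : 0 ≤ cyclicDelta w t :=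
  div_nonneg (Finset.sum_nonneg fun i _ => mismatch_nonneg w t i) (Nat.cast_nonneg _)

lemma cyclicDelta_le_one {w : List ℕ} (hw : ∀ x ∈ w, x ≤ 1) (t : ℕ) : cyclicDelta w t ≤ 1 := by
  refine div_le_one_of_le₀ ?_ (Nat.cast_nonneg _)
  simpa using Finset.sum_le_card_nsmul (Finset.range w.length) _ 1
    fun i _ => mismatch_le_one hw t i

lemma cyclicDelta_rotate (w : List ℕ) (s t : ℕ) : cyclicDelta (w.rotate s) t = cyclicDelta w t := by
  simp only [cyclicDelta, List.length_rotate, mismatch_rotate,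
    sum_range_add_of_periodic (mismatch_periodic w t)]

lemma cyclicDelta_append_comm (u v : List ℕ) (t : ℕ) :
    cyclicDelta (u ++ v) t = cyclicDelta (v ++ u) t := by
  rw [← cyclicDelta_rotate (u ++ v) u.length, List.rotate_append_length_eq]

lemma abs_wordDelta_sub_cyclicDelta_le {w : List ℕ} (hw : ∀ x ∈ w, x ≤ 1) (t : ℕ) :
    |wordDelta w t - cyclicDelta w t| ≤ t / w.length := by
  rw [wordDelta, cyclicDelta, ← sub_div, abs_div, Nat.abs_cast]
  gcongr
  have hinner : ∀ i, i + t < w.length →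
      |(w.getD (i + t) 0 : ℝ) - w.getD i 0| = mismatch w t i := fun i hi => by
    rw [mismatch, periodicExt_of_lt hi, periodicExt_of_lt (by omega)]
  refine abs_sum_range_sub_sum_range_le (fun i _ => ?_) fun i hi => ?_
  · split_ifs with hi
    · rw [hinner i hi, sub_self, abs_zero]
      exact zero_le_one
    · exact abs_sub_le_of_nonneg_of_le zero_le_one le_rfl (mismatch_nonneg w t i)
        (mismatch_le_one hw t i)
  · rw [if_pos hi, hinner i hi]

lemma abs_sum_mismatch_sub_sum_mismatch_append_le {u v : List ℕ} (hw : ∀ x ∈ u ++ v, x ≤ 1)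
    (t : ℕ) :
    |∑ i ∈ Finset.range u.length, mismatch u t i -
      ∑ i ∈ Finset.range u.length, mismatch (u ++ v) t i| ≤ t := by
  have hu : ∀ x ∈ u, x ≤ 1 := fun x hx => hw x (List.mem_append_left _ hx)
  refine abs_sum_range_sub_sum_range_le (fun i _ => ?_) fun i hi =>
    (mismatch_append_of_lt v hi).symm
  exact abs_sub_le_of_nonneg_of_le (mismatch_nonneg _ _ _) (mismatch_le_one hu t i)
    (mismatch_nonneg _ _ _) (mismatch_le_one hw t i)

lemma abs_cyclicDelta_sub_cyclicDelta_concat_le {w : List ℕ} {c : ℕ} (hw : ∀ x ∈ w ++ [c], x ≤ 1)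
    (t : ℕ) :
    |cyclicDelta w t - cyclicDelta (w ++ [c]) t| ≤ 2 * t / (w ++ [c]).length := by
  rcases t.eq_zero_or_pos with rfl | ht
  · simp [cyclicDelta_zero]
  have hw' : ∀ x ∈ w, x ≤ 1 := fun x hx => hw x (List.mem_append_left _ hx)
  set n := w.length
  set S := ∑ i ∈ Finset.range n, mismatch w t i
  set S' := ∑ i ∈ Finset.range n, mismatch (w ++ [c]) t i
  have hlen : ((w ++ [c]).length : ℝ) = n + 1 := by simp [n]
  have hS : n * cyclicDelta w t = S := length_mul_cyclicDelta w t
  have hS' : (n + 1) * cyclicDelta (w ++ [c]) t = S' + mismatch (w ++ [c]) t n := by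
    rw [← hlen, length_mul_cyclicDelta, List.length_append, List.length_singleton,
      Finset.sum_range_succ]
  have hold : |S - S'| ≤ t := abs_sum_mismatch_sub_sum_mismatch_append_le hw t
  have hnew : |cyclicDelta w t - mismatch (w ++ [c]) t n| ≤ 1 :=
    abs_sub_le_of_nonneg_of_le (cyclicDelta_nonneg w t) (cyclicDelta_le_one hw' t)
      (mismatch_nonneg _ _ _) (mismatch_le_one hw t n)
  have hn : (0 : ℝ) < n + 1 := by positivity
  rw [hlen, le_div_iff₀ hn]
  calc |cyclicDelta w t - cyclicDelta (w ++ [c]) t| * (n + 1)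
      = |(cyclicDelta w t - cyclicDelta (w ++ [c]) t) * (n + 1)| := by
        rw [abs_mul, abs_of_pos hn]
    _ = |(S - S') + (cyclicDelta w t - mismatch (w ++ [c]) t n)| := by
        congr 1
        linear_combination hS - hS'
    _ ≤ |S - S'| + |cyclicDelta w t - mismatch (w ++ [c]) t n| := abs_add_le _ _
    _ ≤ t + t := add_le_add hold (hnew.trans (mod_cast ht))
    _ = 2 * t := (two_mul _).symm

lemma abs_cyclicDelta_sub_cyclicDelta_insert_le {u v : List ℕ} {c : ℕ}
    (hw : ∀ x ∈ u ++ [c] ++ v, x ≤ 1) (t : ℕ) :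
    |cyclicDelta (u ++ v) t - cyclicDelta (u ++ [c] ++ v) t| ≤
      2 * t / (u ++ [c] ++ v).length := by
  have hperm : (v ++ u ++ [c]).Perm (u ++ [c] ++ v) := by
    rw [List.append_assoc]
    exact List.perm_append_comm
  rw [cyclicDelta_append_comm u v, cyclicDelta_append_comm (u ++ [c]) v, ← List.append_assoc,
    ← hperm.length_eq]
  exact abs_cyclicDelta_sub_cyclicDelta_concat_le (fun x hx => hw x (hperm.mem_iff.1 hx)) t

lemma length_wordPow (w : List ℕ) (m : ℕ) : (wordPow w m).length = m * w.length := by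
  simp [wordPow]

lemma wordPow_succ (w : List ℕ) (m : ℕ) : wordPow w (m + 1) = w ++ wordPow w m := by
  simp [wordPow, List.replicate_succ]

lemma wordPow_add (w : List ℕ) (m n : ℕ) : wordPow w (m + n) = wordPow w m ++ wordPow w n := by
  rw [wordPow, List.replicate_add, List.flatten_append, wordPow, wordPow]

lemma mem_of_mem_wordPow {w : List ℕ} {m x : ℕ} (hx : x ∈ wordPow w m) : x ∈ w := by
  simp only [wordPow, List.mem_flatten, List.mem_replicate] at hx
  obtain ⟨_, ⟨-, rfl⟩, hx⟩ := hx
  exact hx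

lemma getD_wordPow {w : List ℕ} {m i : ℕ} (hi : i < m * w.length) :
    (wordPow w m).getD i 0 = periodicExt w i := by
  induction m generalizing i with
  | zero => simp at hi
  | succ m ih =>
    rw [wordPow_succ]
    rcases lt_or_ge i w.length with h | h
    · rw [List.getD_append _ _ _ _ h, periodicExt_of_lt h]
    · rw [Nat.succ_mul] at hi
      rw [List.getD_append_right _ _ _ _ h, ih (by omega), ← periodicExt_periodic w,
        Nat.sub_add_cancel h]

lemma periodicExt_wordPow (w : List ℕ) {m : ℕ} (hm : m ≠ 0) :
    periodicExt (wordPow w m) = periodicExt w := by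
  funext i
  rcases w.length.eq_zero_or_pos with hw | hw
  · simp [List.length_eq_zero_iff.1 hw, periodicExt, wordPow]
  · have hi : i % (m * w.length) < m * w.length := Nat.mod_lt _ (by positivity)
    rw [periodicExt, length_wordPow, getD_wordPow hi, periodicExt, Nat.mod_mul_left_mod,
      periodicExt]

lemma cyclicDelta_wordPow (w : List ℕ) {m : ℕ} (hm : m ≠ 0) (t : ℕ) :
    cyclicDelta (wordPow w m) t = cyclicDelta w t := by
  have hmismatch : mismatch (wordPow w m) t = mismatch w t := by
    funext i
    simp only [mismatch, periodicExt_wordPow w hm]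
  rw [cyclicDelta, hmismatch, length_wordPow, sum_range_mul_of_periodic (mismatch_periodic w t),
    nsmul_eq_mul, Nat.cast_mul, mul_div_mul_left _ _ (Nat.cast_ne_zero.2 hm), cyclicDelta]

lemma tendsto_wordDelta_wordPow {w : List ℕ} (hw : ∀ x ∈ w, x ≤ 1) (hne : w ≠ []) (t : ℕ) :
    Tendsto (fun N => wordDelta (wordPow w N) t) atTop (𝓝 (cyclicDelta w t)) := by
  have hlen : Tendsto (fun N => (wordPow w N).length) atTop atTop := by
    simp only [length_wordPow]
    exact tendsto_id.atTop_mul_const' (List.length_pos_iff.2 hne)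
  rw [tendsto_iff_dist_tendsto_zero]
  refine squeeze_zero' (Eventually.of_forall fun _ => dist_nonneg) ?_
    ((tendsto_const_div_atTop_nhds_zero_nat (t : ℝ)).comp hlen)
  filter_upwards [eventually_ne_atTop 0] with N hN
  rw [Real.dist_eq, ← cyclicDelta_wordPow w hN]
  exact abs_wordDelta_sub_cyclicDelta_le (fun x hx => hw x (mem_of_mem_wordPow hx)) t

lemma pow_le_hseq (b k : ℕ) : b ^ k ≤ hseq b k := by
  induction k with
  | zero => rfl
  | succ k ih =>
    rcases b.eq_zero_or_pos with rfl | hb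
    · simp
    · have hpos : 0 < hseq b k := (Nat.pow_pos hb).trans_le ih
      exact (Nat.le_mul_of_pos_right _ hpos).trans (Nat.le_succ _)

lemma Bword_letter_le_one (b a k : ℕ) : ∀ x ∈ Bword b a k, x ≤ 1 := by
  induction k with
  | zero => simp [Bword]
  | succ k ih =>
    intro x hx
    simp only [Bword, List.mem_append, List.mem_singleton] at hx
    rcases hx with (hx | rfl) | hx
    · exact ih x (mem_of_mem_wordPow hx)
    · exact le_rfl
    · exact ih x (mem_of_mem_wordPow hx)

lemma Bword_ne_nil (b a k : ℕ) : Bword b a k ≠ [] := by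
  cases k <;> simp [Bword]

section Construction

variable {b a : ℕ}

lemma mul_pow_add_sub_mul_pow (hab : a ≤ b) (k : ℕ) :
    a * b ^ k + (b - a) * b ^ k = b ^ (k + 1) := by
  rw [← add_mul, Nat.add_sub_cancel' hab, pow_succ']

lemma length_Bword (hab : a ≤ b) (k : ℕ) : (Bword b a k).length = hseq b k := by
  induction k with
  | zero => rfl
  | succ k ih =>
    rw [hseq, ← mul_pow_add_sub_mul_pow hab k]
    simp only [Bword, List.length_append, length_wordPow, ih, List.length_singleton]
    ring

lemma deltaN_eq_wordDelta (hab : a ≤ b) (k t N : ℕ) :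
    deltaN b a k t N = wordDelta (wordPow (Bword b a k) N) t := by
  rw [deltaN, wordDelta, length_wordPow, length_Bword hab, one_div_mul_eq_div]

lemma tendsto_deltaN (hab : a ≤ b) (k t : ℕ) :
    Tendsto (fun N => deltaN b a k t N) atTop (𝓝 (cyclicDelta (Bword b a k) t)) := by
  simpa only [deltaN_eq_wordDelta hab] using
    tendsto_wordDelta_wordPow (Bword_letter_le_one b a k) (Bword_ne_nil b a k) t

lemma abs_cyclicDelta_Bword_sub_succ_le (hb : b ≠ 0) (hab : a ≤ b) (k t : ℕ) :
    |cyclicDelta (Bword b a k) t - cyclicDelta (Bword b a (k + 1)) t| ≤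
      2 * t / hseq b (k + 1) := by
  rw [← cyclicDelta_wordPow (Bword b a k) (pow_ne_zero (k + 1) hb), ← mul_pow_add_sub_mul_pow hab k,
    wordPow_add, ← length_Bword hab]
  exact abs_cyclicDelta_sub_cyclicDelta_insert_le (Bword_letter_le_one b a (k + 1)) t

lemma exists_tendsto_cyclicDelta_Bword (hb : 2 ≤ b) (hab : a ≤ b) (t : ℕ) :
    ∃ L : ℝ, Tendsto (fun k => cyclicDelta (Bword b a k) t) atTop (𝓝 L) := by
  refine cauchySeq_tendsto_of_complete (cauchySeq_of_le_geometric_two (C := 2 * t) fun k => ?_)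
  have hgrowth : 2 ^ (k + 1) ≤ hseq b (k + 1) :=
    (Nat.pow_le_pow_left hb (k + 1)).trans (pow_le_hseq b (k + 1))
  calc dist (cyclicDelta (Bword b a k) t) (cyclicDelta (Bword b a (k + 1)) t)
      ≤ 2 * t / hseq b (k + 1) := abs_cyclicDelta_Bword_sub_succ_le (by omega) hab k t
    _ ≤ 2 * t / 2 ^ (k + 1) := by
        gcongr
        exact_mod_cast hgrowth
    _ = 2 * t / 2 / 2 ^ k := by rw [pow_succ', div_div]

end Construction

theorem deltak_cauchy_and_converges_general (b a : ℕ) (hb : 2 ≤ b) (hab : a ≤ b)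
    (t : ℕ) (δk : ℕ → ℝ)
    (hδk : ∀ k ≥ 1, Tendsto (fun N => deltaN b a k t N) atTop (𝓝 (δk k))) :
    (∀ k ≥ 1, |δk k - δk (k + 1)| ≤ 2 * (t : ℝ) / (hseq b (k + 1) : ℝ)) ∧
    ∃ L : ℝ, Tendsto δk atTop (𝓝 L) := by
  have hval : ∀ k ≥ 1, δk k = cyclicDelta (Bword b a k) t := fun k hk =>
    tendsto_nhds_unique (hδk k hk) (tendsto_deltaN hab k t)
  refine ⟨fun k hk => ?_, ?_⟩
  · rw [hval k hk, hval (k + 1) (by omega)]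
    exact abs_cyclicDelta_Bword_sub_succ_le (by omega) hab k t
  · obtain ⟨L, hL⟩ := exists_tendsto_cyclicDelta_Bword hb hab t
    exact ⟨L, hL.congr' ((eventually_ge_atTop 1).mono fun k hk => (hval k hk).symm)⟩

/-- the limits `δ_k(t)` satisfy `|δ_k(t) - δ_{k+1}(t)| ≤ 2t / h (k+1)`,
hence `δ(t) = lim_{k→∞} δ_k(t)` exists. -/
theorem deltak_cauchy_and_converges (b a : ℕ) (hb : 2 ≤ b) (ha1 : 1 ≤ a) (ha2 : a ≤ b - 1)
    (t : ℕ) (ht : 1 ≤ t) (δk : ℕ → ℝ)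
    (hδk : ∀ k ≥ 1, Tendsto (fun N => deltaN b a k t N) atTop (𝓝 (δk k))) :
    (∀ k ≥ 1, |δk k - δk (k + 1)| ≤ 2 * (t : ℝ) / (hseq b (k + 1) : ℝ)) ∧
    ∃ L : ℝ, Tendsto δk atTop (𝓝 L) :=
  deltak_cauchy_and_converges_general b a hb (ha2.trans (Nat.sub_le b 1)) t δk hδk
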